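/- In the Hull–White case γ ≡ 0, if σ(u) > 0 for all u ∈ [t,v] and t < v, then the covariance matrix of the pair (short rate, compounded rate) is positive definite: S_rr(t,v) > 0, S_zz(t,v) > 0, and S_rr(t,v)·S_zz(t,v) − S_rz(t,v)² > 0. -/

import Mathlib

open MeasureTheory Real

/-- Mean reversion factor `φ_r(t,v) = exp(−∫_t^v α)`. -/
noncomputable def phiR (α : ℝ → ℝ) (t v : ℝ) : ℝ := Real.exp (-(∫ u in t..v, α u))

/-- Variance of the short-rate factor `Σ_rr(t,v)`. -/
noncomputable def Srr (α σ : ℝ → ℝ) (t v : ℝ) : ℝ := ∫ u in t..v, (phiR α u v) ^ 2 * (σ u) ^ 2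

/-- Smile dispersion factor `ψ_r(t,v)`. -/
noncomputable def psiR (α σ γ : ℝ → ℝ) (t v : ℝ) : ℝ :=
  Real.exp ((1 / 2) * (γ v) ^ 2 * Srr α σ t v)

/-- Rate–integral covariance `Σ_rz(t,v)`. -/
noncomputable def Srz (α σ γ : ℝ → ℝ) (t v : ℝ) : ℝ :=
  ∫ u in t..v, psiR α σ γ t u * phiR α u v * Srr α σ t u

/-- Variance of the compounding variable `Σ_zz(t,v)`. -/
noncomputable def Szz (α σ γ : ℝ → ℝ) (t v : ℝ) : ℝ :=
  2 * ∫ u in t..v, psiR α σ γ t u * Srz α σ γ t u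

/-- `B*(t,v) = ∫_t^v ψ_r(t,u) φ_r(t,u) du`. -/
noncomputable def Bstar (α σ γ : ℝ → ℝ) (t v : ℝ) : ℝ :=
  ∫ u in t..v, psiR α σ γ t u * phiR α t u

/-- Drift of the compounding variable `μ*(y,t,v)`. -/
noncomputable def muStar (α σ γ : ℝ → ℝ) (y t v : ℝ) : ℝ :=
  Bstar α σ γ t v * (y + Srz α σ γ 0 t) + (1 / 2) * (Bstar α σ γ t v) ^ 2 * Srr α σ 0 t

/-- One-dimensional Gaussian density with mean `m` and variance `s`. -/
noncomputable def gauss (x m s : ℝ) : ℝ :=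
  (Real.sqrt (2 * Real.pi * s))⁻¹ * Real.exp (-(x - m) ^ 2 / (2 * s))

/-- Centered bivariate Gaussian density with covariance `!![srr, srz; srz, szz]` at `(a, b)`. -/
noncomputable def gauss2 (a b srr srz szz : ℝ) : ℝ :=
  (2 * Real.pi * Real.sqrt (srr * szz - srz ^ 2))⁻¹ *
    Real.exp (-(szz * a ^ 2 - 2 * srz * a * b + srr * b ^ 2) / (2 * (srr * szz - srz ^ 2)))

/-- The leading-order (Hull–White) Green's function `G₀`. -/
noncomputable def G0 (α σ γ : ℝ → ℝ) (y z t η ζ v : ℝ) : ℝ :=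
  gauss2 (η - phiR α t v * y) (ζ - z - muStar α σ γ y t v)
    (Srr α σ t v) (Srz α σ γ t v) (Szz α σ γ t v)

/-!
Dividing by powers of `φ_r(t, v)` turns the three covariances into iterated primitives: with
`A(v) = ∫_t^v (σ / φ_r(t, ·))²`, `w = ψ_r(t, ·) φ_r(t, ·)` and `C(v) = ∫_t^v w A`, one has
`Σ_rr = φ_r² A`, `Σ_rz = φ_r C` and `Σ_zz = 2 ∫_t^v w C`. Since `C² = 2 ∫_t^v C w A` and `A` is
nondecreasing, replacing `A` by its final value `A(v)` inside the integral gives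
`C(v)² < 2 A(v) ∫_t^v w C`, which is the determinant inequality.
-/

section IteratedIntegrals

open Set intervalIntegral

variable {t v : ℝ}

lemma lt_of_frequently_ae_restrict_Ioc {β : Type*} [LinearOrder β] [MeasurableSpace β]
    {μ : Measure β} {a b : β} {p : β → Prop} (h : ∃ᵐ x ∂μ.restrict (Ioc a b), p x) : a < b := by
  by_contra hle
  simp [Ioc_eq_empty hle] at h

lemma sq_integral_eq_two_mul_integral_mul_integral {f : ℝ → ℝ}
    (hf : IntervalIntegrable f volume t v) :
    (∫ u in t..v, f u) ^ 2 = 2 * ∫ u in t..v, f u * ∫ s in t..u, f s := by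
  have hF := hf.absolutelyContinuousOnInterval_intervalIntegral left_mem_uIcc
  have hparts := hF.integral_deriv_mul_eq_sub hF
  rw [integral_same, zero_mul, sub_zero, ← sq] at hparts
  rw [← hparts, ← intervalIntegral.integral_const_mul]
  refine integral_congr_ae ?_
  filter_upwards [hf.ae_hasDerivAt_integral] with u hu hmem
  rw [(hu (uIoc_subset_uIcc hmem) t left_mem_uIcc).deriv]
  ring

lemma continuousOn_integral_right {f : ℝ → ℝ} (htv : t ≤ v) (hf : ContinuousOn f (Icc t v)) :
    ContinuousOn (fun x => ∫ u in t..x, f u) (Icc t v) := by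
  simpa only [uIcc_of_le htv] using
    continuousOn_primitive_interval' (hf.intervalIntegrable_of_Icc htv) left_mem_uIcc

lemma sq_integral_mul_lt_of_monotoneOn {w A : ℝ → ℝ} (htv : t < v)
    (hw : ContinuousOn w (Icc t v)) (hw_pos : ∀ u ∈ Icc t v, 0 < w u)
    (hA : ContinuousOn A (Icc t v)) (hA_mono : MonotoneOn A (Icc t v))
    (hAt : 0 ≤ A t) (hAtv : A t < A v) :
    (∫ u in t..v, w u * A u) ^ 2 <
      2 * (A v * ∫ u in t..v, w u * ∫ s in t..u, w s * A s) := by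
  set C : ℝ → ℝ := fun x => ∫ s in t..x, w s * A s
  have hwA : ContinuousOn (fun u => w u * A u) (Icc t v) := hw.mul hA
  have hC : ContinuousOn C (Icc t v) := continuousOn_integral_right htv.le hwA
  have hwA_nonneg : ∀ u ∈ Icc t v, 0 ≤ w u * A u := fun u hu =>
    mul_nonneg (hw_pos u hu).le (hAt.trans (hA_mono (left_mem_Icc.2 htv.le) hu hu.1))
  have hC_nonneg : ∀ u ∈ Icc t v, 0 ≤ C u := fun u hu =>
    integral_nonneg hu.1 fun s hs => hwA_nonneg s ⟨hs.1, hs.2.trans hu.2⟩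
  obtain ⟨m, hm, htm, hmv⟩ : ∃ m ∈ Icc t v, A t < A m ∧ A m < A v := by
    obtain ⟨y, hy⟩ := exists_between hAtv
    obtain ⟨m, hm, rfl⟩ := intermediate_value_Icc htv.le hA ⟨hy.1.le, hy.2.le⟩
    exact ⟨m, hm, hy⟩
  have hCm : 0 < C m := by
    have htm' : t < m := hm.1.lt_of_ne fun h => htm.ne (congrArg A h)
    refine integral_pos htm' (hwA.mono (Icc_subset_Icc_right hm.2))
      (fun u hu => hwA_nonneg u ⟨hu.1.le, hu.2.trans hm.2⟩) ⟨m, right_mem_Icc.2 hm.1, ?_⟩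
    exact mul_pos (hw_pos m hm) (hAt.trans_lt htm)
  have hlt : ∫ u in t..v, A u * (w u * C u) < ∫ u in t..v, A v * (w u * C u) := by
    refine integral_lt_integral_of_continuousOn_of_le_of_exists_lt htv (hA.mul (hw.mul hC))
      ((hw.mul hC).const_mul _) (fun u hu => ?_)
      ⟨m, hm, mul_lt_mul_of_pos_right hmv (mul_pos (hw_pos m hm) hCm)⟩
    have hu' := Ioc_subset_Icc_self hu
    exact mul_le_mul_of_nonneg_right (hA_mono hu' (right_mem_Icc.2 htv.le) hu.2)
      (mul_nonneg (hw_pos u hu').le (hC_nonneg u hu'))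
  calc (∫ u in t..v, w u * A u) ^ 2
      = 2 * ∫ u in t..v, w u * A u * C u := sq_integral_eq_two_mul_integral_mul_integral
        (hwA.intervalIntegrable_of_Icc htv.le)
    _ = 2 * ∫ u in t..v, A u * (w u * C u) := by simp only [mul_comm (w _), mul_assoc]
    _ < 2 * ∫ u in t..v, A v * (w u * C u) := mul_lt_mul_of_pos_left hlt two_pos
    _ = 2 * (A v * ∫ u in t..v, w u * C u) := by rw [intervalIntegral.integral_const_mul]

end IteratedIntegrals

section Rescaling

open Set intervalIntegral

/-- The variance over `[t, v]` of the short-rate factor divided by its mean reversion factor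
`φ_r(t, ·)`; unlike `Srr`, it is a primitive in `v`. -/
noncomputable def rescaledVar (α σ : ℝ → ℝ) (t v : ℝ) : ℝ :=
  ∫ u in t..v, (σ u / phiR α t u) ^ 2

/-- The weight `ψ_r(t,u) φ_r(t,u)`, which is the integrand of `Bstar`; `Srz` and `Szz` are, up to
scaling, iterated integrals of `rescaledVar` against it. -/
noncomputable def bstarWeight (α σ γ : ℝ → ℝ) (t u : ℝ) : ℝ :=
  psiR α σ γ t u * phiR α t u

variable {α σ γ : ℝ → ℝ} {t u v : ℝ}

lemma phiR_pos (α : ℝ → ℝ) (t v : ℝ) : 0 < phiR α t v := exp_pos _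

lemma phiR_mul_phiR (htu : IntervalIntegrable α volume t u)
    (huv : IntervalIntegrable α volume u v) :
    phiR α t u * phiR α u v = phiR α t v := by
  rw [phiR, phiR, phiR, ← exp_add, ← neg_add, integral_add_adjacent_intervals htu huv]

lemma phiR_eq_div (hα : IntervalIntegrable α volume t v) (hu : u ∈ uIcc t v) :
    phiR α u v = phiR α t v / phiR α t u := by
  rw [eq_div_iff (phiR_pos α t u).ne', mul_comm]
  exact phiR_mul_phiR (hα.mono_set (uIcc_subset_uIcc_left hu))
    (hα.mono_set (uIcc_subset_uIcc_right hu))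

lemma continuousOn_phiR (hα : IntervalIntegrable α volume t v) :
    ContinuousOn (phiR α t) (uIcc t v) :=
  (continuousOn_primitive_interval' hα left_mem_uIcc).neg.rexp

lemma Srr_eq_mul_rescaledVar (hα : IntervalIntegrable α volume t v) :
    Srr α σ t v = phiR α t v ^ 2 * rescaledVar α σ t v := by
  rw [Srr, rescaledVar, ← intervalIntegral.integral_const_mul]
  refine integral_congr fun u hu => ?_
  simp only [phiR_eq_div hα hu]
  ring

lemma Srz_eq_mul_integral (hα : IntervalIntegrable α volume t v) :
    Srz α σ γ t v = phiR α t v * ∫ u in t..v, bstarWeight α σ γ t u * rescaledVar α σ t u := by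
  rw [Srz, ← intervalIntegral.integral_const_mul]
  refine integral_congr fun u hu => ?_
  have hφ := (phiR_pos α t u).ne'
  simp only [phiR_eq_div hα hu, bstarWeight,
    Srr_eq_mul_rescaledVar (hα.mono_set (uIcc_subset_uIcc_left hu))]
  field_simp

lemma Szz_eq_integral_integral (hα : IntervalIntegrable α volume t v) :
    Szz α σ γ t v = 2 * ∫ u in t..v, bstarWeight α σ γ t u *
      ∫ s in t..u, bstarWeight α σ γ t s * rescaledVar α σ t s := by
  rw [Szz]
  refine congrArg (2 * ·) (integral_congr fun u hu => ?_)
  simp only [Srz_eq_mul_integral (hα.mono_set (uIcc_subset_uIcc_left hu)), bstarWeight, mul_assoc]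

lemma intervalIntegrable_sq_div_phiR (hα : IntervalIntegrable α volume t v)
    (hσ : IntervalIntegrable (fun u => σ u ^ 2) volume t v) :
    IntervalIntegrable (fun u => (σ u / phiR α t u) ^ 2) volume t v := by
  simp only [div_pow]
  exact hσ.mul_continuousOn (g := fun u => (phiR α t u ^ 2)⁻¹)
    (((continuousOn_phiR hα).pow 2).inv₀ fun u _ => (pow_pos (phiR_pos α t u) 2).ne')

lemma continuousOn_rescaledVar (hα : IntervalIntegrable α volume t v)
    (hσ : IntervalIntegrable (fun u => σ u ^ 2) volume t v) :
    ContinuousOn (rescaledVar α σ t) (uIcc t v) :=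
  continuousOn_primitive_interval' (intervalIntegrable_sq_div_phiR hα hσ) left_mem_uIcc

lemma monotoneOn_rescaledVar (hα : IntervalIntegrable α volume t v)
    (hσ : IntervalIntegrable (fun u => σ u ^ 2) volume t v) :
    MonotoneOn (rescaledVar α σ t) (Icc t v) := fun _ ha _ hb hab =>
  integral_mono_interval le_rfl ha.1 hab (ae_of_all _ fun _ => sq_nonneg _)
    ((intervalIntegrable_sq_div_phiR hα hσ).mono_set
      (uIcc_subset_uIcc_left (Icc_subset_uIcc hb)))

lemma rescaledVar_pos (hα : IntervalIntegrable α volume t v)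
    (hσ : IntervalIntegrable (fun u => σ u ^ 2) volume t v)
    (hσ_ne : ∃ᵐ u ∂volume.restrict (Ioc t v), σ u ≠ 0) :
    0 < rescaledVar α σ t v := by
  have htv := lt_of_frequently_ae_restrict_Ioc hσ_ne
  have hint := intervalIntegrable_sq_div_phiR hα hσ
  have hnonneg : 0 ≤ rescaledVar α σ t v := integral_nonneg htv.le fun _ _ => sq_nonneg _
  refine hnonneg.lt_of_ne' fun hzero => hσ_ne ?_
  rw [rescaledVar, integral_eq_zero_iff_of_le_of_nonneg_ae htv.le
    (ae_of_all _ fun _ => sq_nonneg _) hint] at hzero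
  filter_upwards [hzero] with u hu
  simpa [(phiR_pos α t u).ne'] using hu

lemma bstarWeight_pos (α σ γ : ℝ → ℝ) (t u : ℝ) : 0 < bstarWeight α σ γ t u :=
  mul_pos (exp_pos _) (phiR_pos α t u)

lemma continuousOn_bstarWeight (hα : IntervalIntegrable α volume t v)
    (hσ : IntervalIntegrable (fun u => σ u ^ 2) volume t v) (hγ : ContinuousOn γ (uIcc t v)) :
    ContinuousOn (bstarWeight α σ γ t) (uIcc t v) := by
  have hφ := continuousOn_phiR hα
  have hSrr : ContinuousOn (Srr α σ t) (uIcc t v) :=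
    ((hφ.pow 2).mul (continuousOn_rescaledVar hα hσ)).congr fun u hu =>
      Srr_eq_mul_rescaledVar (hα.mono_set (uIcc_subset_uIcc_left hu))
  exact (((hγ.pow 2).const_mul (1 / 2)).mul hSrr).rexp.mul hφ

end Rescaling

theorem HW_covariance_posdef_general {α σ γ : ℝ → ℝ} {t v : ℝ}
    (hα : IntervalIntegrable α volume t v)
    (hσ : IntervalIntegrable (fun u => σ u ^ 2) volume t v)
    (hσ_ne : ∃ᵐ u ∂volume.restrict (Set.Ioc t v), σ u ≠ 0)
    (hγ : ContinuousOn γ (Set.Icc t v)) :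
    0 < Srr α σ t v ∧ 0 < Szz α σ γ t v ∧
      0 < Srr α σ t v * Szz α σ γ t v - Srz α σ γ t v ^ 2 := by
  have htv := lt_of_frequently_ae_restrict_Ioc hσ_ne
  have hA_pos := rescaledVar_pos hα hσ hσ_ne
  have hA := continuousOn_rescaledVar hα hσ
  rw [← Set.uIcc_of_le htv.le] at hγ
  have hw := continuousOn_bstarWeight hα hσ hγ
  rw [Set.uIcc_of_le htv.le] at hA hw
  have hAt : rescaledVar α σ t t = 0 := intervalIntegral.integral_same
  have hdet := sq_integral_mul_lt_of_monotoneOn htv hw (fun u _ => bstarWeight_pos α σ γ t u)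
    hA (monotoneOn_rescaledVar hα hσ) hAt.ge (hAt.trans_lt hA_pos)
  have hφ : 0 < phiR α t v ^ 2 := pow_pos (phiR_pos α t v) 2
  rw [Srr_eq_mul_rescaledVar hα, Srz_eq_mul_integral hα, Szz_eq_integral_integral hα]
  have hAW_pos := pos_of_mul_pos_right ((sq_nonneg _).trans_lt hdet) zero_le_two
  exact ⟨mul_pos hφ hA_pos, mul_pos two_pos (pos_of_mul_pos_right hAW_pos hA_pos.le),
    (mul_pos hφ (sub_pos.2 hdet)).trans_eq (by ring)⟩

theorem HW_covariance_posdef (α σ : ℝ → ℝ)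
    (hα : Continuous α) (hσc : Continuous σ)
    (t v : ℝ) (htv : t < v) (hσ : ∀ u ∈ Set.Icc t v, 0 < σ u) :
    0 < Srr α σ t v ∧ 0 < Szz α σ (fun _ => 0) t v ∧
      0 < Srr α σ t v * Szz α σ (fun _ => 0) t v - (Srz α σ (fun _ => 0) t v) ^ 2 := by
  have : (ae (volume.restrict (Set.Ioc t v))).NeBot := ae_restrict_neBot.2 (by simpa using htv)
  exact HW_covariance_posdef_general (hα.intervalIntegrable t v)
    ((hσc.pow 2).intervalIntegrable t v)
    (ae_restrict_of_forall_mem measurableSet_Ioc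
      fun u hu => (hσ u (Set.Ioc_subset_Icc_self hu)).ne').frequently continuousOn_const
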